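/- arXiv:1704.05304 — 4 statements merged into one kernel-verified Lean document; each statement's English description precedes it below -/
import Mathlib

section
/- Let V be a virtually cyclic group. Then V has bCyc if and only if V is finite, or V is infinite cyclic, or V is isomorphic to the infinite dihedral group ℤ ⋊ ℤ/2 = ⟨ t, s ∣ s² = 1, s t s = t^{-1} ⟩. -/
/-!
The easy direction exhibits the elements: all of `V` if `V` is finite, a generator if `V` is cyclic,
and `r 1`, `sr 0`, `sr 1` in the infinite dihedral group.

Conversely let `V` be infinite with bCyc. The normal core of the given cyclic subgroup is a normal
infinite cyclic subgroup `C = ⟨c⟩` of finite index `n`, and every element of `V` conjugates `c` to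
`c` or `c⁻¹`. Every `a` satisfies `a ^ n = c ^ α(a)` for an integer `α(a)`. The key point
(`eq_one_of_finOrder`) is that a finite-order element `k` commuting with `c` is trivial. Take for `e`
the product of the nonzero `α(a)` over the finite set of bCyc. Then `k * c ^ e` is conjugate to some
`a ^ j`; comparing `n`-th powers gives `± e * n = j * α(a)`, so `n ∣ j` and `a ^ j ∈ C`. Hence
`k * c ^ e ∈ C`, so `k ∈ C`, and `C` is torsion-free.

The centralizer `Z` of `c` is therefore torsion-free with a central cyclic subgroup of finite index,
and the transfer shows that it is cyclic (`isCyclic_of_central`), say `Z = ⟨t⟩`. If `Z = V`, then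
`V` is cyclic. Otherwise an element `v ∉ Z` inverts `c`, and `v ^ 2` lies in `Z` and has finite
order, so `v ^ 2 = 1`. Applied to `s ∉ Z` and to `s * t`, this gives the dihedral relations.
-/

/-- A group is *virtually cyclic* if it has a cyclic subgroup of finite index. -/
def VirtuallyCyclic (G : Type*) [Group G] : Prop :=
  ∃ H : Subgroup G, IsCyclic H ∧ H.FiniteIndex

/-- A group has *bVCyc* if there are finitely many virtually cyclic subgroups such that
every element lies in a conjugate of one of them. -/
def bVCyc (G : Type*) [Group G] : Prop :=
  ∃ 𝒱 : Finset (Subgroup G), (∀ V ∈ 𝒱, VirtuallyCyclic V) ∧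
    ∀ g : G, ∃ V ∈ 𝒱, ∃ x : G, x * g * x⁻¹ ∈ V

/-- A group has *BVC* if there are finitely many virtually cyclic subgroups such that
every virtually cyclic subgroup is contained in a conjugate of one of them. -/
def BVC (G : Type*) [Group G] : Prop :=
  ∃ 𝒱 : Finset (Subgroup G), (∀ V ∈ 𝒱, VirtuallyCyclic V) ∧
    ∀ W : Subgroup G, VirtuallyCyclic W →
      ∃ V ∈ 𝒱, ∃ x : G, ∀ w ∈ W, x * w * x⁻¹ ∈ V

/-- A group has *bCyc* if there are finitely many elements g₁, …, gₙ such that every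
element is conjugate to a power of some gᵢ. -/
def bCyc (G : Type*) [Group G] : Prop :=
  ∃ s : Finset G, ∀ g : G, ∃ a ∈ s, ∃ k : ℤ, IsConj g (a ^ k)

/-- An element is *primitive* if it cannot be written as a proper power. -/
def Primitive {G : Type*} [Group G] (g : G) : Prop :=
  ∀ (h : G) (n : ℤ), g = h ^ n → n = 1 ∨ n = -1

/-- The `n`-th power map `G → center G`, `n` the index of the center, is a homomorphism by the
transfer. It is injective if `G` is torsion-free, so `G` is abelian, and then the `C.index`-th power
map embeds `G` into `C`. -/
lemma isCyclic_of_central {G : Type*} [Group G] (C : Subgroup G) [C.FiniteIndex] [IsCyclic C]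
    (hC : C ≤ Subgroup.center G) (htf : ∀ g : G, IsOfFinOrder g → g = 1) : IsCyclic G := by
  have : (Subgroup.center G).FiniteIndex := Subgroup.finiteIndex_of_le hC
  have hpow : ∀ (n : ℕ) (g : G), n ≠ 0 → g ^ n = 1 → g = 1 := fun n g hn h =>
    htf g (isOfFinOrder_iff_pow_eq_one.2 ⟨n, Nat.pos_of_ne_zero hn, h⟩)
  have hinj : Function.Injective (MonoidHom.transferCenterPow G) := by
    rw [injective_iff_map_eq_one]
    intro g hg
    refine hpow (Subgroup.center G).index g Subgroup.FiniteIndex.index_ne_zero ?_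
    rw [← MonoidHom.transferCenterPow_apply, hg]
    rfl
  have hcomm : ∀ a b : G, a * b = b * a := fun a b => hinj (by
    rw [map_mul, map_mul]
    exact mul_comm' _ _)
  have : C.Normal := ⟨fun x hx g => by rwa [hcomm g x, mul_inv_cancel_right]⟩
  let f : G →* C :=
    { toFun := fun g => ⟨g ^ C.index, C.pow_index_mem g⟩
      map_one' := by ext; simp
      map_mul' := fun a b => by ext; simp [Commute.mul_pow (hcomm a b)] }
  refine isCyclic_of_injective f ?_
  rw [injective_iff_map_eq_one]
  intro g hg
  exact hpow C.index g Subgroup.FiniteIndex.index_ne_zero (congrArg Subtype.val hg)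

lemma conj_eq_or_inv {V : Type*} [Group V] {c : V} (hc : ¬ IsOfFinOrder c)
    (hN : (Subgroup.zpowers c).Normal) (v : V) : v * c * v⁻¹ = c ∨ v * c * v⁻¹ = c⁻¹ := by
  obtain ⟨a, ha⟩ := hN.conj_mem c (Subgroup.mem_zpowers c) v
  obtain ⟨b, hb⟩ := hN.conj_mem c (Subgroup.mem_zpowers c) v⁻¹
  simp only [inv_inv] at ha hb
  have h : c ^ (b * a) = c ^ (1 : ℤ) := by
    rw [zpow_mul, hb]
    have h1 : (v⁻¹ * c * v) ^ a = v⁻¹ * c ^ a * v := by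
      have := conj_zpow (i := a) (a := v⁻¹) (b := c)
      rwa [inv_inv] at this
    rw [h1, ha]
    group
  have h2 := (injective_zpow_iff_not_isOfFinOrder.2 hc) h
  rcases Int.eq_one_or_neg_one_of_mul_eq_one (by rwa [mul_comm] at h2 : a * b = 1) with h3 | h3
  · left; rw [← ha, h3, zpow_one]
  · right; rw [← ha, h3]; simp

lemma zpow_finOrder {V : Type*} [Group V] {c : V} (hc : ¬ IsOfFinOrder c) {m : ℤ}
    (h : IsOfFinOrder (c ^ m)) : m = 0 := by
  obtain ⟨l, hl, h⟩ := isOfFinOrder_iff_pow_eq_one.1 h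
  have h1 : c ^ (m * l) = c ^ (0 : ℤ) := by rw [zpow_mul, zpow_natCast, h, zpow_zero]
  have h2 := (injective_zpow_iff_not_isOfFinOrder.2 hc) h1
  rcases mul_eq_zero.1 h2 with h3 | h3
  · exact h3
  · omega

/-- With `α a` the exponent in `a ^ n = c ^ α a`, the exponent `e` below is a multiple of every nonzero
`α a`. This forces `k * c ^ e`, which is conjugate to a power of some `a`, to lie in `⟨c⟩`. -/
lemma eq_one_of_finOrder {V : Type*} [Group V] {c : V} (hc : ¬ IsOfFinOrder c)
    (hN : (Subgroup.zpowers c).Normal) (hF : (Subgroup.zpowers c).FiniteIndex) (hb : bCyc V)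
    (k : V) (hk : Commute k c) (hkf : IsOfFinOrder k) : k = 1 := by
  obtain ⟨S, hS⟩ := hb
  set n := (Subgroup.zpowers c).index with hn
  have hn0 : (n : ℤ) ≠ 0 := by exact_mod_cast hF.index_ne_zero
  have hinj := injective_zpow_iff_not_isOfFinOrder.2 hc
  have hα : ∀ a : V, ∃ m : ℤ, c ^ m = a ^ n := fun a =>
    (Subgroup.zpowers c).pow_index_mem a
  choose α hα using hα
  have htf : ∀ x ∈ Subgroup.zpowers c, IsOfFinOrder x → x = 1 := by
    rintro _ ⟨m, rfl⟩ hm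
    simp only at hm ⊢
    rw [zpow_finOrder hc hm, zpow_zero]
  classical
  set e : ℤ := ∏ a ∈ S.filter (fun a => α a ≠ 0), α a with he
  have he0 : e ≠ 0 := Finset.prod_ne_zero_iff.2 fun a ha => (Finset.mem_filter.1 ha).2
  obtain ⟨a, haS, j, hj⟩ := hS (k * c ^ e)
  obtain ⟨v, hv⟩ := isConj_iff.1 hj
  have hkn : k ^ n = 1 := htf _ ((Subgroup.zpowers c).pow_index_mem k) hkf.pow
  have hxn : (k * c ^ e) ^ n = c ^ (e * n) := by
    rw [(hk.zpow_right e).mul_pow, hkn, one_mul, zpow_mul, zpow_natCast]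
  have hcn : v * c ^ (e * n) * v⁻¹ = c ^ (α a * j) := by
    rw [← hxn, ← conj_pow, hv, zpow_mul, hα, ← zpow_natCast, ← zpow_natCast, ← zpow_mul,
      ← zpow_mul, mul_comm]
  have hor : e * n = α a * j ∨ -(e * n) = α a * j := by
    rw [← conj_zpow] at hcn
    rcases conj_eq_or_inv hc hN v with h | h <;> rw [h] at hcn
    · exact Or.inl (hinj hcn)
    · rw [inv_zpow'] at hcn
      exact Or.inr (hinj hcn)
  have hαa : α a ≠ 0 := by
    intro h0
    rw [h0, zero_mul, neg_eq_zero, or_self] at hor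
    exact mul_ne_zero he0 hn0 hor
  obtain ⟨d, hd⟩ : α a ∣ e := Finset.dvd_prod_of_mem α (Finset.mem_filter.2 ⟨haS, hαa⟩)
  have hnj : (n : ℤ) ∣ j := by
    rw [hd] at hor
    rcases hor with h | h
    · exact ⟨d, mul_left_cancel₀ hαa (by linarith)⟩
    · exact ⟨-d, mul_left_cancel₀ hαa (by linarith)⟩
  obtain ⟨q, rfl⟩ := hnj
  have hmem : a ^ ((n : ℤ) * q) ∈ Subgroup.zpowers c := by
    rw [zpow_mul, zpow_natCast]
    exact Subgroup.zpow_mem _ ((Subgroup.zpowers c).pow_index_mem a) q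
  rw [← hv, ← hN.mem_comm_iff, ← mul_assoc, inv_mul_cancel, one_mul] at hmem
  exact htf k (((Subgroup.zpowers c).mul_mem_cancel_right
    (Subgroup.zpow_mem _ (Subgroup.mem_zpowers c) e)).1 hmem) hkf

/-- If `v` inverts `c`, then `v ^ 2` commutes
with `c`. Some positive power of `v` is a power of `c`; it is both fixed and inverted by `v`, hence
trivial. So `v ^ 2` has finite order and `eq_one_of_finOrder` applies. -/
lemma mul_self_eq_one_of_conj_eq_inv {V : Type*} [Group V] {c : V} (hc : ¬ IsOfFinOrder c)
    (hN : (Subgroup.zpowers c).Normal) (hF : (Subgroup.zpowers c).FiniteIndex) (hb : bCyc V)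
    (v : V) (hv : v * c * v⁻¹ = c⁻¹) : v * v = 1 := by
  have hvc : v * c = c⁻¹ * v := by rw [← hv]; group
  have hvc' : v * c⁻¹ = c * v := by
    have : v * c⁻¹ * v⁻¹ = c := by rw [← conj_inv, hv, inv_inv]
    nth_rewrite 2 [← this]; group
  refine eq_one_of_finOrder hc hN hF hb _ ?_ ?_
  · show v * v * c = c * (v * v)
    rw [mul_assoc, hvc, ← mul_assoc, hvc', mul_assoc]
  · obtain ⟨m, hm⟩ := (Subgroup.zpowers c).pow_index_mem v
    simp only at hm
    have h1 : v * c ^ m * v⁻¹ = c ^ m := by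
      rw [hm, ← pow_succ', pow_succ, mul_inv_cancel_right]
    rw [← conj_zpow, hv, inv_zpow'] at h1
    have h2 := (injective_zpow_iff_not_isOfFinOrder.2 hc) h1
    have h3 : v ^ (Subgroup.zpowers c).index = 1 := by
      rw [← hm, show m = 0 by omega, zpow_zero]
    have h4 : IsOfFinOrder v :=
      isOfFinOrder_iff_pow_eq_one.2 ⟨_, Nat.pos_of_ne_zero hF.index_ne_zero, h3⟩
    rw [← pow_two]; exact h4.pow

/-- The homomorphism from the infinite dihedral group given by `t` and an involution `s` that
inverts `t`. The definitional equality `ZMod 0 = ℤ` provides the exponents. -/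
def dihedralHom {V : Type*} [Group V] (s t : V) (hs : s * s = 1) (hst : s * t * s⁻¹ = t⁻¹) :
    DihedralGroup 0 →* V :=
  have key : ∀ i : ℤ, t ^ i * s = s * t ^ (-i) := fun i => by
    have h : s * t ^ (-i) * s⁻¹ = t ^ i := by
      rw [← conj_zpow, hst, inv_zpow', neg_neg]
    rw [← h, inv_mul_cancel_right]
  MonoidHom.mk' (fun x => match x with
    | .r i => t ^ (show ℤ from i)
    | .sr i => s * t ^ (show ℤ from i)) (by
    rintro (i | i) (j | j)
    · exact zpow_add t (show ℤ from i) (show ℤ from j)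
    · change s * t ^ ((show ℤ from j) - (show ℤ from i)) =
        t ^ (show ℤ from i) * (s * t ^ (show ℤ from j))
      rw [← mul_assoc, key, mul_assoc, ← zpow_add]
      congr 2; ring
    · change s * t ^ ((show ℤ from i) + (show ℤ from j)) =
        s * t ^ (show ℤ from i) * t ^ (show ℤ from j)
      rw [zpow_add, mul_assoc]
    · change t ^ ((show ℤ from j) - (show ℤ from i)) =
        s * t ^ (show ℤ from i) * (s * t ^ (show ℤ from j))
      rw [mul_assoc, ← mul_assoc (t ^ _) s, key, ← mul_assoc, ← mul_assoc, hs, one_mul, ← zpow_add]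
      congr 1; ring)

lemma bCyc_of_mulEquiv {V W : Type*} [Group V] [Group W] (f : V ≃* W) (h : bCyc W) : bCyc V := by
  classical
  obtain ⟨S, hS⟩ := h
  refine ⟨S.image f.symm, fun g => ?_⟩
  obtain ⟨a, ha, k, hk⟩ := hS (f g)
  refine ⟨f.symm a, Finset.mem_image_of_mem _ ha, k, ?_⟩
  have := f.symm.toMonoidHom.map_isConj hk
  simpa using this

lemma bCyc_dihedral : bCyc (DihedralGroup 0) := by
  classical
  refine ⟨{.r 1, .sr 0, .sr 1}, ?_⟩
  rintro (i | i)
  · exact ⟨.r 1, by simp, i, by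
      have h := DihedralGroup.r_one_zpow (n := 0) i
      exact h ▸ IsConj.refl _⟩
  · -- conjugation by `r m` shifts the index of a reflection by `2 * m`
    have key : ∀ m j : ZMod 0, IsConj (DihedralGroup.sr (j + (m + m))) (.sr j) := fun m j =>
      isConj_iff.2 ⟨.r m, by
        rw [DihedralGroup.inv_r, DihedralGroup.r_mul_sr, DihedralGroup.sr_mul_r]
        congr 1; ring⟩
    rcases Int.even_or_odd' (show ℤ from i) with ⟨m, hm | hm⟩
    · refine ⟨.sr 0, by simp, 1, ?_⟩
      rw [zpow_one]
      convert key m 0 using 2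
      exact hm.trans (by change 2 * m = (0 : ℤ) + (m + m); ring)
    · refine ⟨.sr 1, by simp, 1, ?_⟩
      rw [zpow_one]
      convert key m 1 using 2
      exact hm.trans (by change 2 * m + 1 = (1 : ℤ) + (m + m); ring)

lemma exists_normal_zpowers {V : Type*} [Group V] [Infinite V] (hvc : VirtuallyCyclic V) :
    ∃ c : V, ¬ IsOfFinOrder c ∧ (Subgroup.zpowers c).Normal ∧ (Subgroup.zpowers c).FiniteIndex := by
  obtain ⟨H, hH, hHf⟩ := hvc
  have hcyc : IsCyclic H.normalCore :=
    isCyclic_of_injective (Subgroup.inclusion H.normalCore_le)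
      (Subgroup.inclusion_injective H.normalCore_le)
  obtain ⟨c, hc⟩ := (Subgroup.isCyclic_iff_exists_zpowers_eq_top H.normalCore).1 hcyc
  have hF : (Subgroup.zpowers c).FiniteIndex := by rw [hc]; infer_instance
  refine ⟨c, fun hfin => ?_, by rw [hc]; infer_instance, hF⟩
  have : Finite (Subgroup.zpowers c) := hfin.finite_zpowers
  have : Finite V :=
    ((Subgroup.zpowers c).finite_iff_finite_and_finiteIndex).2 ⟨inferInstance, hF⟩
  exact not_finite V

/-- A virtually cyclic group has bCyc if and only if it is finite, infinite cyclic or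
infinite dihedral. -/
theorem stmt_7 {V : Type*} [Group V] (hvc : VirtuallyCyclic V) :
    bCyc V ↔ (Finite V ∨ (Infinite V ∧ IsCyclic V) ∨ Nonempty (V ≃* DihedralGroup 0)) := by
  constructor
  · intro hb
    rcases finite_or_infinite V with hfin | hinf
    · exact Or.inl hfin
    right
    obtain ⟨c, hc, hN, hF⟩ := exists_normal_zpowers hvc
    set Z := Subgroup.centralizer {c} with hZ
    have memZ : ∀ v, v ∈ Z ↔ v * c * v⁻¹ = c := fun v => by
      rw [hZ, Subgroup.mem_centralizer_singleton_iff, mul_inv_eq_iff_eq_mul]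
    have hZcyc : IsCyclic Z := by
      have hcZ : c ∈ Z := (memZ c).2 (by group)
      have : IsCyclic ((Subgroup.zpowers c).subgroupOf Z) := isCyclic_of_injective
        (Subgroup.subgroupOfEquivOfLe (Subgroup.zpowers_le.2 hcZ)).toMonoidHom
        (MulEquiv.injective _)
      refine isCyclic_of_central ((Subgroup.zpowers c).subgroupOf Z) ?_ ?_
      · intro x hx
        rw [Subgroup.mem_subgroupOf] at hx
        obtain ⟨m, hm⟩ := hx
        rw [Subgroup.mem_center_iff]
        intro z
        ext
        simp only [Subgroup.coe_mul]
        rw [← hm]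
        have hz : Commute (z : V) c := Subgroup.mem_centralizer_singleton_iff.1 z.2
        exact hz.zpow_right m
      · intro z hz
        ext
        exact eq_one_of_finOrder hc hN hF hb z (Subgroup.mem_centralizer_singleton_iff.1 z.2)
          (Z.subtype.isOfFinOrder hz)
    obtain ⟨t, ht⟩ := (Subgroup.isCyclic_iff_exists_zpowers_eq_top Z).1 hZcyc
    by_cases hall : ∀ v, v ∈ Z
    · left
      exact ⟨hinf, ⟨t, fun v => by
        have hv := hall v
        rwa [← ht] at hv⟩⟩
    right
    push Not at hall
    obtain ⟨s, hs⟩ := hall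
    have hinv : ∀ v, v ∉ Z → v * v = 1 := fun v hv =>
      mul_self_eq_one_of_conj_eq_inv hc hN hF hb v ((conj_eq_or_inv hc hN v).resolve_left fun h => hv ((memZ v).2 h))
    have htZ : t ∈ Z := ht ▸ Subgroup.mem_zpowers t
    have hss := hinv s hs
    have hsinv : s⁻¹ = s := inv_eq_of_mul_eq_one_left hss
    have hst : s * t * s⁻¹ = t⁻¹ := by
      have h := hinv (s * t) fun h => hs ((Z.mul_mem_cancel_right htZ).1 h)
      rw [hsinv]
      exact eq_inv_of_mul_eq_one_left (by rwa [mul_assoc])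
    have htinf : ¬ IsOfFinOrder t := fun h => by
      have hcZ : c ∈ Z := (memZ c).2 (by group)
      rw [← ht] at hcZ
      obtain ⟨m, hm⟩ := hcZ
      exact hc (hm ▸ h.zpow)
    -- `s * v ∈ Z` for `v ∉ Z`, as both `s` and `v` invert `c`
    have hsv : ∀ v, v ∉ Z → s * v ∈ Z := fun v hv => by
      have h1 := (conj_eq_or_inv hc hN v).resolve_left fun h => hv ((memZ v).2 h)
      have h2 := (conj_eq_or_inv hc hN s).resolve_left fun h => hs ((memZ s).2 h)
      rw [memZ]
      calc s * v * c * (s * v)⁻¹ = s * (v * c * v⁻¹) * s⁻¹ := by group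
        _ = c := by rw [h1, ← conj_inv, h2, inv_inv]
    refine ⟨(MulEquiv.ofBijective (dihedralHom s t hss hst) ⟨?_, ?_⟩).symm⟩
    · rw [injective_iff_map_eq_one]
      rintro (i | i) hi
      · have hi' : t ^ (show ℤ from i) = t ^ (0 : ℤ) := by rw [zpow_zero]; exact hi
        have : i = 0 := (injective_zpow_iff_not_isOfFinOrder.2 htinf) hi'
        rw [this]; rfl
      · exfalso
        have hi' : s * t ^ (show ℤ from i) = 1 := hi
        exact hs ((Z.mul_mem_cancel_right (Z.zpow_mem htZ (show ℤ from i))).1 (hi' ▸ Z.one_mem))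
    · intro v
      by_cases hv : v ∈ Z
      · rw [← ht] at hv
        obtain ⟨m, hm⟩ := hv
        exact ⟨.r m, hm⟩
      · have h := hsv v hv
        rw [← ht] at h
        obtain ⟨m, hm⟩ := h
        refine ⟨.sr m, ?_⟩
        change s * t ^ m = v
        simp only at hm
        rw [hm, ← mul_assoc, hss, one_mul]
  · rintro (hfin | ⟨-, hcyc⟩ | ⟨⟨f⟩⟩)
    · have := Fintype.ofFinite V
      exact ⟨Finset.univ, fun g => ⟨g, Finset.mem_univ g, 1, by rw [zpow_one]⟩⟩
    · obtain ⟨g, hg⟩ := hcyc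
      refine ⟨{g}, fun x => ⟨g, Finset.mem_singleton_self g, ?_⟩⟩
      obtain ⟨k, hk⟩ := hg x
      exact ⟨k, by rw [← hk]⟩
    · exact bCyc_of_mulEquiv (by assumption) bCyc_dihedral
end

section
/- Let G be a group in which the centralizer of every non-trivial element is an infinite cyclic group. Let a, b ∈ G and suppose a^n = b^m for some nonzero integers m, n. If a is primitive, then b lies in the cyclic subgroup generated by a. -/
/-- In a group where centralizers of non-trivial elements are infinite cyclic, if a
primitive element a satisfies aⁿ = bᵐ with n, m ≠ 0, then b ∈ ⟨a⟩. -/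
theorem stmt_8 {G : Type*} [Group G]
    (hcen : ∀ g : G, g ≠ 1 →
      IsCyclic (Subgroup.centralizer {g}) ∧ Infinite (Subgroup.centralizer {g}))
    (a b : G) (n m : ℤ) (hn : n ≠ 0) (hm : m ≠ 0) (h : a ^ n = b ^ m)
    (ha : Primitive a) : b ∈ Subgroup.zpowers a := by
  -- A primitive element is nontrivial, since `1 = 1 ^ 0`.
  have ha1 : a ≠ 1 := by
    intro h1
    rcases ha 1 0 (by simp [h1]) with h0 | h0 <;> omega
  -- The infinite cyclic centralizer of `a` contains `a`, so `a` has infinite order.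
  have han : a ^ n ≠ 1 := by
    intro h1
    obtain ⟨⟨c, hc⟩, hinf⟩ := hcen a ha1
    have hcfin : ¬ IsOfFinOrder c := by
      intro hfin
      have hz : (Subgroup.zpowers c : Set (Subgroup.centralizer {a})).Finite :=
        finite_zpowers.2 hfin
      exact Set.infinite_univ (hz.subset fun x _ => hc x)
    obtain ⟨k, hk⟩ := hc ⟨a, Subgroup.mem_centralizer_singleton_iff.2 rfl⟩
    have hk : c ^ k = ⟨a, Subgroup.mem_centralizer_singleton_iff.2 rfl⟩ := hk
    have hkn : c ^ (k * n) = c ^ (0 : ℤ) := by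
      rw [zpow_mul, hk, zpow_zero]
      exact Subtype.ext h1
    have hkn0 : k * n = 0 := injective_zpow_iff_not_isOfFinOrder.2 hcfin hkn
    obtain rfl : k = 0 := (mul_eq_zero.1 hkn0).resolve_right hn
    rw [zpow_zero] at hk
    exact ha1 (congrArg Subtype.val hk).symm
  -- Both `a` and `b` commute with `a ^ n = b ^ m`, so both are powers of a common `c`.
  obtain ⟨⟨c, hc⟩, -⟩ := hcen (a ^ n) han
  obtain ⟨k, hk⟩ := hc ⟨a, Subgroup.mem_centralizer_singleton_iff.2
    ((Commute.refl a).zpow_right n).eq⟩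
  obtain ⟨l, hl⟩ := hc ⟨b, Subgroup.mem_centralizer_singleton_iff.2
    (by rw [h]; exact ((Commute.refl b).zpow_right m).eq)⟩
  have hk : (c : G) ^ k = a := congrArg Subtype.val hk
  have hl : (c : G) ^ l = b := congrArg Subtype.val hl
  rcases ha c k hk.symm with rfl | rfl
  · exact ⟨l, by simpa [← hk] using hl⟩
  · exact ⟨-l, by simpa [← hk] using hl⟩
end

section
/- Let G be a group and let a, b ∈ G be two primitive elements. Let A = ⟨a⟩ and B = ⟨b⟩ be the cyclic subgroups they generate and let φ : A → B be the isomorphism sending a to b. Then any primitive element g ∈ G, considered via the canonical embedding as an element of the HNN extension G∗_{φ} = ⟨ G, t ∣ t^{-1} a t = b ⟩, is still primitive in G∗_{φ}. -/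
namespace HNNPrimitive

open HNNExtension HNNExtension.NormalWord

section General

variable {G : Type*} [Group G] {A B : Subgroup G} (φ : A ≃* B)

/-! ### Reduced lists and length -/

/-- The product of the syllables `t ^ u * g` over the pairs `(u, g)` of a list. -/
def lprod (l : List (ℤˣ × G)) : HNNExtension G A B φ :=
  (l.map (fun x => t ^ (x.1 : ℤ) * of x.2)).prod

variable (A B) in
/-- A list of syllables is reduced if it has no pinch `t ^ u * g * t ^ (-u)` with
`g ∈ toSubgroup A B u`. -/
def Red (l : List (ℤˣ × G)) : Prop :=
  l.IsChain (fun a b => a.2 ∈ toSubgroup A B a.1 → a.1 = b.1)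

@[simp] lemma lprod_nil : lprod φ ([] : List (ℤˣ × G)) = 1 := rfl

@[simp] lemma lprod_cons (x : ℤˣ × G) (l : List (ℤˣ × G)) :
    lprod φ (x :: l) = t ^ (x.1 : ℤ) * of x.2 * lprod φ l := by simp [lprod]

@[simp] lemma lprod_append (l l' : List (ℤˣ × G)) :
    lprod φ (l ++ l') = lprod φ l * lprod φ l' := by simp [lprod]

lemma exists_reduced (x : HNNExtension G A B φ) :
    ∃ p : G × List (ℤˣ × G), Red A B p.2 ∧ x = of p.1 * lprod φ p.2 := by
  obtain ⟨d⟩ := TransversalPair.nonempty G A B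
  let w : NormalWord d := NormalWord.equiv φ d x
  exact ⟨(w.head, w.toList), w.chain, ((NormalWord.equiv φ d).symm_apply_apply x).symm⟩

/-- The number of occurrences of `t ^ (±1)` in a reduced word representing `x`. -/
noncomputable def len (x : HNNExtension G A B φ) : ℕ :=
  (exists_reduced φ x).choose.2.length

/-- By Britton's lemma the length can be computed from any reduced word. -/
lemma len_eq (g : G) (l : List (ℤˣ × G)) (hl : Red A B l) :
    len φ (of g * lprod φ l) = l.length := by
  have h := (exists_reduced φ (of g * lprod φ l)).choose_spec
  set p := (exists_reduced φ (of g * lprod φ l)).choose with hp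
  have := (ReducedWord.map_fst_eq_and_of_prod_eq φ
    (w₁ := ⟨g, l, hl⟩) (w₂ := ⟨p.1, p.2, h.1⟩) h.2).1
  have h2 := congrArg List.length this
  simp only [List.length_map] at h2
  rw [len, ← hp, h2]

lemma len_lprod (l : List (ℤˣ × G)) (hl : Red A B l) : len φ (lprod φ l) = l.length := by
  simpa using len_eq φ 1 l hl

lemma len_of (g : G) : len φ (of g) = 0 := by
  simpa using len_eq φ g [] List.isChain_nil

lemma len_of_mul (g : G) (x : HNNExtension G A B φ) : len φ (of g * x) = len φ x := by
  obtain ⟨⟨c, l⟩, hl, rfl⟩ := exists_reduced φ x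
  rw [← mul_assoc, ← map_mul, len_eq φ _ _ hl, len_eq φ _ _ hl]

lemma t_zpow_mul_of (u : ℤˣ) (x : toSubgroup A B u) :
    (t ^ (u : ℤ) * of (x : G) : HNNExtension G A B φ) =
      of (toSubgroupEquiv φ u x : G) * t ^ (u : ℤ) := by
  rcases Int.units_eq_one_or u with rfl | rfl
  · rw [Units.val_one, zpow_one]
    exact t_mul_of (φ := φ) x
  · rw [Units.val_neg, Units.val_one, zpow_neg, zpow_one]
    exact inv_t_mul_of (φ := φ) x

lemma units_ne {u v : ℤˣ} (h : ¬ u = v) : v = -u := by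
  rcases Int.units_eq_one_or u with rfl | rfl <;> rcases Int.units_eq_one_or v with rfl | rfl <;>
    simp_all

lemma len_t_mul (x : HNNExtension G A B φ) :
    len φ (t * x) ≤ len φ x + 1 ∧ len φ x ≤ len φ (t * x) + 1 := by
  obtain ⟨⟨c, l⟩, hl, rfl⟩ := exists_reduced φ x
  dsimp only at hl ⊢
  by_cases h : Red A B ((1, c) :: l)
  · have h1 := len_lprod φ _ h
    simp only [lprod_cons, Units.val_one, zpow_one, mul_assoc, List.length_cons] at h1
    rw [h1, len_eq φ _ _ hl]
    omega
  · -- the new letter `t` cancels the first syllable `t⁻¹ * d`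
    rcases l with _ | ⟨⟨v, d⟩, l⟩
    · exact absurd (List.isChain_singleton _) h
    have h' : c ∈ toSubgroup A B 1 ∧ ¬ (1 : ℤˣ) = v := by
      by_contra h'
      exact h (List.isChain_cons_cons.2 ⟨by simpa using h', hl⟩)
    obtain ⟨hc, hv⟩ := h'
    obtain rfl := units_ne hv
    have hl' : Red A B l := (List.isChain_cons.1 hl).2
    have e : (t * (of c * lprod φ ((-1, d) :: l)) : HNNExtension G A B φ)
        = of (φ ⟨c, hc⟩ * d) * lprod φ l := by
      have := t_mul_of (φ := φ) ⟨c, hc⟩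
      dsimp only at this
      rw [← mul_assoc, this]
      simp [mul_assoc]
    rw [e, len_eq φ _ _ hl', len_eq φ _ _ hl]
    simp only [List.length_cons]
    omega

lemma len_mul_bounded (y : HNNExtension G A B φ) :
    ∃ N, ∀ x, len φ (y * x) ≤ len φ x + N ∧ len φ x ≤ len φ (y * x) + N := by
  induction y using induction_on with
  | of g => exact ⟨0, fun x => by simp [len_of_mul]⟩
  | t => exact ⟨1, len_t_mul φ⟩
  | mul y z hy hz =>
    obtain ⟨N, hN⟩ := hy
    obtain ⟨M, hM⟩ := hz
    refine ⟨N + M, fun x => ?_⟩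
    have h1 := hN (z * x)
    have h2 := hM x
    rw [mul_assoc]
    omega
  | inv y hy =>
    obtain ⟨N, hN⟩ := hy
    refine ⟨N, fun x => ?_⟩
    have h1 := hN (y⁻¹ * x)
    rw [mul_inv_cancel_left] at h1
    omega

/-- Right multiplication by an element of `G` only changes the last syllable. -/
lemma exists_lprod_mul_of (l : List (ℤˣ × G)) (hl : Red A B l) (hne : l ≠ []) (g : G) :
    ∃ l', Red A B l' ∧ l'.length = l.length ∧ lprod φ l' = lprod φ l * of g := by
  obtain rfl | ⟨l₀, ⟨v, c⟩, rfl⟩ := l.eq_nil_or_concat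
  · exact absurd rfl hne
  rw [List.concat_eq_append] at *
  refine ⟨l₀ ++ [(v, c * g)], ?_, by simp, by simp [mul_assoc]⟩
  have h := List.isChain_append.1 hl
  refine List.isChain_append.2 ⟨h.1, List.isChain_singleton _, ?_⟩
  intro x hx y hy
  obtain rfl : (v, c * g) = y := by simpa using hy
  exact h.2.2 x hx (v, c) (by simp)

lemma len_mul_of (x : HNNExtension G A B φ) (g : G) : len φ (x * of g) = len φ x := by
  obtain ⟨⟨c, l⟩, hl, rfl⟩ := exists_reduced φ x
  dsimp only at hl ⊢
  rcases eq_or_ne l [] with rfl | hne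
  · simp [← map_mul, len_of]
  · obtain ⟨l', hl', e, h⟩ := exists_lprod_mul_of φ l hl hne g
    rw [mul_assoc, ← h, len_eq φ _ _ hl', len_eq φ _ _ hl, e]

/-! ### Cyclic reduction -/

/-- Powers of a cyclically reduced word are reduced. -/
lemma red_replicate (l : List (ℤˣ × G)) (hl : Red A B l)
    (hc : ∀ x ∈ l.getLast?, ∀ y ∈ l.head?, x.2 ∈ toSubgroup A B x.1 → x.1 = y.1) (m : ℕ) :
    Red A B (List.replicate m l).flatten ∧
      ∀ y ∈ (List.replicate m l).flatten.head?, y ∈ l.head? := by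
  induction m with
  | zero => exact ⟨List.isChain_nil, by simp⟩
  | succ m ih =>
    rw [List.replicate_succ, List.flatten_cons]
    refine ⟨List.isChain_append.2 ⟨hl, ih.1, fun x hx y hy => hc x hx y (ih.2 y hy)⟩, ?_⟩
    intro y hy
    rcases l with _ | ⟨z, l⟩
    · simp at hy
    · simpa using hy

lemma lprod_replicate (l : List (ℤˣ × G)) (m : ℕ) :
    lprod φ (List.replicate m l).flatten = lprod φ l ^ m := by
  induction m with
  | zero => simp
  | succ m ih => rw [List.replicate_succ, List.flatten_cons, lprod_append, ih, pow_succ']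

/-- `x` is conjugate to an element of `G`, or to an element whose powers have linearly growing
length. -/
def Dichotomy (x : HNNExtension G A B φ) : Prop :=
  (∃ (y : HNNExtension G A B φ) (g : G), x = y * of g * y⁻¹) ∨
    ∃ y z : HNNExtension G A B φ, x = y * z * y⁻¹ ∧ ∃ k, 1 ≤ k ∧ ∀ m, len φ (z ^ m) = m * k

lemma Dichotomy.conj {x : HNNExtension G A B φ} (h : Dichotomy φ x)
    (c : HNNExtension G A B φ) : Dichotomy φ (c * x * c⁻¹) := by
  rcases h with ⟨y, g, rfl⟩ | ⟨y, z, rfl, h⟩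
  · exact Or.inl ⟨c * y, g, by group⟩
  · exact Or.inr ⟨c * y, z, by group, h⟩

lemma dichotomy_lprod_mul_of (k : ℕ) : ∀ (l : List (ℤˣ × G)), l.length ≤ k → Red A B l →
    ∀ g : G, Dichotomy φ (lprod φ l * of g) := by
  induction k with
  | zero =>
    intro l hk _ g
    obtain rfl : l = [] := List.length_eq_zero_iff.1 (by omega)
    exact Or.inl ⟨1, g, by simp⟩
  | succ k ih =>
    intro l₁ hk₁ hl₁ g
    rcases eq_or_ne l₁ [] with rfl | hne₁
    · exact Or.inl ⟨1, g, by simp⟩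
    obtain ⟨l, hl, hlen, e⟩ := exists_lprod_mul_of φ l₁ hl₁ hne₁ g
    rw [← e]
    have hk : l.length ≤ k + 1 := by omega
    have hpos : 1 ≤ l.length := by
      rw [hlen]; exact List.length_pos_iff.2 hne₁
    clear e hlen hne₁ hl₁ hk₁
    by_cases hc : ∀ x ∈ l.getLast?, ∀ y ∈ l.head?, x.2 ∈ toSubgroup A B x.1 → x.1 = y.1
    · refine Or.inr ⟨1, lprod φ l, by simp, l.length, hpos, fun m => ?_⟩
      rw [← lprod_replicate, len_lprod φ _ (red_replicate l hl hc m).1]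
      simp
    · push Not at hc
      obtain ⟨⟨v, c⟩, hx, ⟨u, d⟩, hy, hmem, hne⟩ := hc
      dsimp only at hmem hne
      obtain rfl := units_ne hne
      -- the word is `t ^ (-v) * d * (middle) * t ^ v * c`; conjugation removes both ends
      rcases l with _ | ⟨z, l⟩
      · simp at hpos
      obtain rfl : z = (-v, d) := by simpa using hy
      obtain rfl | ⟨l₀, w, rfl⟩ := l.eq_nil_or_concat
      · simp at hx
      rw [List.concat_eq_append] at *
      obtain rfl : w = (v, c) := by
        rw [← List.cons_append, List.getLast?_concat] at hx
        simpa using hx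
      have hl₀ : Red A B l₀ := (List.isChain_append.1 (List.isChain_cons.1 hl).2).1
      have key := t_zpow_mul_of φ v ⟨c, hmem⟩
      dsimp only at key
      have h := (ih l₀ (by simp at hk; omega) hl₀
        ((toSubgroupEquiv φ v ⟨c, hmem⟩ : G) * d)).conj φ (t ^ ((-v : ℤˣ) : ℤ) * of d)
      convert! h using 1
      simp only [lprod_cons, lprod_append, lprod_nil, mul_one, key, map_mul, mul_inv_rev,
        Units.val_neg, zpow_neg, inv_inv]
      group

lemma conj_range_or_hyperbolic (x : HNNExtension G A B φ) : Dichotomy φ x := by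
  obtain ⟨⟨c, l⟩, hl, rfl⟩ := exists_reduced φ x
  have h := (dichotomy_lprod_mul_of φ l.length l le_rfl hl c).conj φ (of c)
  convert! h using 1
  group

/-- If a nonzero power of `x` lies in `G`, then `x` is conjugate into `G`. -/
lemma conj_range_of_pow (x : HNNExtension G A B φ) (n : ℕ) (hn : n ≠ 0) (g : G)
    (h : of g = x ^ n) : ∃ (y : HNNExtension G A B φ) (g₀ : G), x = y * of g₀ * y⁻¹ := by
  rcases conj_range_or_hyperbolic φ x with h1 | ⟨y, z, rfl, k, hk, hz⟩
  · exact h1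
  exfalso
  obtain ⟨N, hN⟩ := len_mul_bounded φ y⁻¹
  have bound : ∀ m : ℕ, n * m * k ≤ len φ y + N := by
    intro m
    have e : z ^ (n * m) = y⁻¹ * (of (g ^ m) * y) := by
      rw [map_pow, h, conj_pow, conj_pow, pow_mul]
      group
    have h1 := (hN (of (g ^ m) * y)).1
    rwa [← e, hz, len_of_mul] at h1
  have h1 := bound (len φ y + N + 1)
  have h2 : len φ y + N + 1 ≤ n * (len φ y + N + 1) := Nat.le_mul_of_pos_left _ (by omega)
  have h3 : n * (len φ y + N + 1) ≤ n * (len φ y + N + 1) * k := Nat.le_mul_of_pos_right _ hk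
  omega

end General

/-! ### Primitivity and conjugation -/

lemma primitive_inv {G : Type*} [Group G] {g : G} (hg : Primitive g) : Primitive g⁻¹ := by
  intro h n e
  exact hg h⁻¹ n (by rw [inv_zpow, ← e, inv_inv])

lemma primitive_conj {G : Type*} [Group G] {g : G} (hg : Primitive g) (c : G) :
    Primitive (c * g * c⁻¹) := by
  intro h n e
  refine hg (c⁻¹ * h * c) n ?_
  have := conj_zpow (i := n) (a := c⁻¹) (b := h)
  rw [inv_inv] at this
  rw [this, ← e]
  group

lemma primitive_zpow {G : Type*} [Group G] {a b : G} (hb : Primitive b) {j : ℤ}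
    (h : Primitive (a ^ j)) : Primitive (b ^ j) := by
  rcases h a j rfl with rfl | rfl
  · simpa using hb
  · simpa using primitive_inv hb

variable {G : Type*} [Group G] {a b : G}
  (φ : (Subgroup.zpowers a) ≃* (Subgroup.zpowers b))

lemma primitive_toSubgroupEquiv (ha : Primitive a) (hb : Primitive b)
    (hφ : (φ ⟨a, Subgroup.mem_zpowers a⟩ : G) = b) (u : ℤˣ)
    (x : toSubgroup (Subgroup.zpowers a) (Subgroup.zpowers b) u) (hx : Primitive (x : G)) :
    Primitive (toSubgroupEquiv φ u x : G) := by
  have hφ' : φ ⟨a, Subgroup.mem_zpowers a⟩ = ⟨b, Subgroup.mem_zpowers b⟩ := Subtype.ext hφ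
  rcases Int.units_eq_one_or u with rfl | rfl
  · obtain ⟨_, j, rfl⟩ := x
    have e : φ ⟨a ^ j, j, rfl⟩ = (⟨b, Subgroup.mem_zpowers b⟩ : Subgroup.zpowers b) ^ j := by
      rw [← hφ', ← map_zpow]; rfl
    have : (toSubgroupEquiv φ 1 ⟨a ^ j, j, rfl⟩ : G) = b ^ j := congrArg Subtype.val e
    exact this ▸ primitive_zpow hb hx
  · obtain ⟨_, j, rfl⟩ := x
    have e : φ.symm ⟨b ^ j, j, rfl⟩ =
        (⟨a, Subgroup.mem_zpowers a⟩ : Subgroup.zpowers a) ^ j := by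
      rw [MulEquiv.symm_apply_eq, map_zpow, hφ']; rfl
    have : (toSubgroupEquiv φ (-1) ⟨b ^ j, j, rfl⟩ : G) = a ^ j := congrArg Subtype.val e
    exact this ▸ primitive_zpow ha hx

lemma primitive_of_conj_lprod (ha : Primitive a) (hb : Primitive b)
    (hφ : (φ ⟨a, Subgroup.mem_zpowers a⟩ : G) = b) (l : List (ℤˣ × G)) :
    Red (Subgroup.zpowers a) (Subgroup.zpowers b) l → ∀ g₁ g : G, Primitive g₁ →
      of g₁ * lprod φ l = lprod φ l * of g → Primitive g := by
  induction l with
  | nil =>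
    intro _ g₁ g h e
    rw [lprod_nil, mul_one, one_mul] at e
    exact of_injective φ e ▸ h
  | cons x l ih =>
    obtain ⟨u, d⟩ := x
    intro hl g₁ g h e
    have hl' := (List.isChain_cons.1 hl).2
    by_cases hmem : g₁ ∈ toSubgroup (Subgroup.zpowers a) (Subgroup.zpowers b) (-u)
    · have hp := primitive_toSubgroupEquiv φ ha hb hφ (-u) ⟨g₁, hmem⟩ h
      have key := t_zpow_mul_of φ (-u) ⟨g₁, hmem⟩
      dsimp only at key
      set g₂ : G := (toSubgroupEquiv φ (-u) ⟨g₁, hmem⟩ : G)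
      refine ih hl' (d⁻¹ * g₂ * d⁻¹⁻¹) g (primitive_conj hp d⁻¹) ?_
      have key' : (of g₂ : HNNExtension G _ _ φ) =
          (t ^ (u : ℤ))⁻¹ * of g₁ * t ^ (u : ℤ) := by
        rw [Units.val_neg, zpow_neg] at key
        rw [key]; group
      have e' : (of g₁ : HNNExtension G _ _ φ) * (t ^ (u : ℤ) * of d * lprod φ l) =
          t ^ (u : ℤ) * of d * lprod φ l * of g := by simpa using e
      calc (of (d⁻¹ * g₂ * d⁻¹⁻¹) * lprod φ l : HNNExtension G _ _ φ)
          = (of d)⁻¹ * (t ^ (u : ℤ))⁻¹ * (of g₁ * (t ^ (u : ℤ) * of d * lprod φ l)) := by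
            simp only [map_mul, map_inv, key', inv_inv]; group
        _ = lprod φ l * of g := by rw [e']; group
    · -- `t ^ (-u) * g₁ * t ^ u * d * l` is reduced, so it is too long to equal `d * l * g`
      exfalso
      have hred : Red (Subgroup.zpowers a) (Subgroup.zpowers b) ((-u, g₁) :: (u, d) :: l) :=
        List.isChain_cons_cons.2 ⟨fun hm => absurd hm hmem, hl⟩
      have e2 : lprod φ ((-u, g₁) :: (u, d) :: l) = of d * lprod φ l * of g := by
        rw [lprod_cons, mul_assoc, e]
        simp only [lprod_cons, Units.val_neg, zpow_neg]
        group
      have h1 := len_lprod φ _ hred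
      rw [e2, len_mul_of, len_eq φ _ _ hl'] at h1
      simp only [List.length_cons] at h1
      omega

/-- Primitivity in `G` is invariant under conjugation in the HNN extension. -/
lemma primitive_of_conj (ha : Primitive a) (hb : Primitive b)
    (hφ : (φ ⟨a, Subgroup.mem_zpowers a⟩ : G) = b) (g₁ g : G) (h : Primitive g₁)
    (y : HNNExtension G (Subgroup.zpowers a) (Subgroup.zpowers b) φ)
    (e : of g₁ = y * of g * y⁻¹) : Primitive g := by
  obtain ⟨⟨c, l⟩, hl, rfl⟩ := exists_reduced φ y
  refine primitive_of_conj_lprod φ ha hb hφ l hl (c⁻¹ * g₁ * c⁻¹⁻¹) g (primitive_conj h c⁻¹) ?_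
  simp only [map_mul, map_inv, e, inv_inv]
  group

end HNNPrimitive

open HNNPrimitive in
/-- A primitive element of G remains primitive in the HNN extension G∗_{aᵗ = b} for
primitive elements a, b. -/
theorem stmt_9 {G : Type*} [Group G] (a b : G) (ha : Primitive a) (hb : Primitive b)
    (φ : (Subgroup.zpowers a) ≃* (Subgroup.zpowers b))
    (hφ : (φ ⟨a, Subgroup.mem_zpowers a⟩ : G) = b)
    (g : G) (hg : Primitive g) :
    Primitive (HNNExtension.of g : HNNExtension G (Subgroup.zpowers a) (Subgroup.zpowers b) φ) := by
  intro h n e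
  have hn : n ≠ 0 := by
    rintro rfl
    have h1 : g = 1 := HNNExtension.of_injective φ (by simpa using e)
    have := hg 1 0 (by simpa using h1)
    omega
  obtain ⟨g', hg'⟩ : ∃ g' : G, HNNExtension.of g' = h ^ n.natAbs := by
    rcases Int.natAbs_eq n with hn' | hn'
    · exact ⟨g, by rw [e, ← zpow_natCast, ← hn']⟩
    · refine ⟨g⁻¹, ?_⟩
      rw [map_inv, e, ← zpow_natCast, ← zpow_neg]
      congr 1
      omega
  obtain ⟨y, h₀, rfl⟩ := conj_range_of_pow φ h n.natAbs (by omega) g' hg'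
  rw [conj_zpow, ← map_zpow] at e
  exact primitive_of_conj φ ha hb hφ g (h₀ ^ n) hg y e h₀ n rfl
end

section
/- Let G be a group, let a, b ∈ G be non-trivial elements and let n, m be integers with |n| ≥ 2 and |m| ≥ 2. Let φ : ⟨a^n⟩ → ⟨b^m⟩ be an isomorphism sending a^n to b^m. Then any primitive element g ∈ G, considered via the canonical embedding as an element of the HNN extension G∗_{φ} = ⟨ G, t ∣ t^{-1} a^n t = b^m ⟩, is still primitive in G∗_{φ}. -/
open HNNExtension in
/-- An element of an HNN extension commuting with `of g` either lies in the base group, or `g` is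
conjugate in the base group into one of the associated subgroups. -/
theorem HNNExtension.mem_base_or_conj_mem_of_commute {G : Type*} [Group G] {A B : Subgroup G}
    {φ : A ≃* B} {g : G} {h : HNNExtension G A B φ} (hc : of g * h = h * of g) :
    (∃ x : G, h = of x) ∨ ∃ x : G, x⁻¹ * g * x ∈ A ∨ x⁻¹ * g * x ∈ B := by
  obtain ⟨d⟩ := NormalWord.TransversalPair.nonempty G A B
  obtain ⟨w, hw⟩ : ∃ w : NormalWord.ReducedWord G A B, w.prod φ = h :=
    ⟨((NormalWord.equiv φ d) h).toReducedWord, (NormalWord.equiv φ d).symm_apply_apply h⟩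
  obtain ⟨x, l, chain⟩ := w
  rcases List.eq_nil_or_concat l with rfl | ⟨l, ⟨u, y⟩, rfl⟩
  · left
    exact ⟨x, by simpa [NormalWord.ReducedWord.prod] using hw.symm⟩
  · right
    -- Right multiplication by `g` only changes the last group letter, which is unconstrained.
    have chain₂ : (l ++ [(u, y * g)]).IsChain
        (fun a b => a.2 ∈ toSubgroup A B a.1 → a.1 = b.1) := by
      simpa [List.isChain_append] using chain
    have key := ReducedWord.map_fst_eq_and_of_prod_eq φ
      (w₁ := ⟨x, l ++ [(u, y * g)], chain₂⟩) (w₂ := ⟨g * x, l.concat (u, y), chain⟩) (by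
        have h₁ : NormalWord.ReducedWord.prod φ ⟨x, l ++ [(u, y * g)], chain₂⟩ = h * of g := by
          simp [← hw, NormalWord.ReducedWord.prod, mul_assoc]
        have h₂ : NormalWord.ReducedWord.prod φ ⟨g * x, l.concat (u, y), chain⟩ = of g * h := by
          simp [← hw, NormalWord.ReducedWord.prod, mul_assoc]
        rw [h₁, h₂, hc])
    obtain ⟨v, hv⟩ : ∃ v, v ∈ (l ++ [(u, y * g)]).head?.map Prod.fst := by
      cases l <;> simp
    have hmem := key.2 v hv
    refine ⟨x, ?_⟩
    rcases Int.units_eq_one_or v with rfl | rfl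
    · right; simpa [mul_assoc] using hmem
    · left; simpa [mul_assoc] using hmem

/-- A primitive element is not conjugate to a power of a proper power. -/
theorem Primitive.conj_notMem_zpowers {G : Type*} [Group G] {g : G} (hg : Primitive g)
    (x a : G) {n : ℤ} (hn : 2 ≤ |n|) : x⁻¹ * g * x ∉ Subgroup.zpowers (a ^ n) := by
  rintro ⟨j, hj⟩
  have hj : (a ^ n) ^ j = x⁻¹ * g * x := hj
  have : g = (x * a ^ j * x⁻¹) ^ n := by
    rw [conj_zpow, ← zpow_mul, mul_comm, zpow_mul, hj]
    group
  rcases hg _ _ this with rfl | rfl <;> simp at hn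

/-- A primitive element of G remains primitive in the HNN extension G∗_{(aⁿ)ᵗ = bᵐ}
whenever |n|, |m| ≥ 2. -/
theorem stmt_10 {G : Type*} [Group G] (a b : G) (ha : a ≠ 1) (hb : b ≠ 1)
    (n m : ℤ) (hn : 2 ≤ |n|) (hm : 2 ≤ |m|)
    (φ : (Subgroup.zpowers (a ^ n)) ≃* (Subgroup.zpowers (b ^ m)))
    (hφ : (φ ⟨a ^ n, Subgroup.mem_zpowers _⟩ : G) = b ^ m)
    (g : G) (hg : Primitive g) :
    Primitive (HNNExtension.of g :
      HNNExtension G (Subgroup.zpowers (a ^ n)) (Subgroup.zpowers (b ^ m)) φ) := by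
  intro h k hk
  have hc : HNNExtension.of g * h = h * HNNExtension.of g := by
    rw [hk]; exact (Commute.refl h).zpow_left k
  rcases HNNExtension.mem_base_or_conj_mem_of_commute hc with ⟨x, rfl⟩ | ⟨x, hx | hx⟩
  · exact hg x k (HNNExtension.of_injective φ (by rw [hk, map_zpow]))
  · exact absurd hx (hg.conj_notMem_zpowers x a hn)
  · exact absurd hx (hg.conj_notMem_zpowers x b hm)
end
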